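/- Let (Q, Σ) be a DFA with n = |Q| satisfying hypothesis (H), and suppose there exists a word u over Σ with |Qu| ≤ n − 3. Let p₁, p₂, p₃ be pairwise distinct states, b, a, d ∈ Σ letters, and q ∈ Q∖{p₁, p₂} a state such that: Qb = Q∖{p₁}, p₁b = p₂b, Qa = Q, Qd = Q, p₁a = p₂, {p₂, p₃}a = {p₁, p₃}, p₂d = p₃, {p₁, p₃}d = {p₁, p₂}, qb ≠ p₁, and Q(badb) = Q∖{p₁, qb}. Then there exists a word w over Σ with |w| ≤ 9 and |Qw| ≤ n − 3. -/

import Mathlib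

/-- The image of a finite set of states `R` under a word (list of letters),
where each letter `s` acts on states via `act s`. -/
def wordImage {Q A : Type*} [DecidableEq Q] (act : A → Q → Q) (R : Finset Q) :
    List A → Finset Q
  | [] => R
  | s :: w => wordImage act (R.image (act s)) w

/-!
Track the sets of states that images of short words avoid. Appending a letter of defect one to a
word avoiding `T` produces a word avoiding one more state, unless `T` meets the pair that the
letter merges. As words of length at most 3 have defect at most 1, this forces every letter of
defect one to miss `p₁` and merge `p₁, p₂`, as `b` does, and every permutation letter to send `p₁`
to `p₁` or `p₂`.

Suppose now that words of length at most 9 have defect at most 2. The pairs `{p₁, p₂}` and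
`{p₁, p₃}` are avoided within length 5. If a letter sent a state of `P = {p₁, p₂, p₃}` outside `P`,
applying it to one of these pairs or after `b a d` would avoid `{p₁, y}` within length 6 or
`{p₂, y}` within length 7, for some `y ∉ P`; the letters `a`, `d` would move this pair off
`{p₁, p₂}`, and `b` would reach defect 3. So every letter maps `P` into itself; since it misses at
most `p₁`, the image of every word contains the complement of `P` and meets `P`, so no word at all
has defect 3.
-/

section WordImage

variable {Q A : Type*} [DecidableEq Q] {act : A → Q → Q}

theorem wordImage_append (R : Finset Q) (v w : List A) :
    wordImage act R (v ++ w) = wordImage act (wordImage act R v) w := by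
  induction v generalizing R with
  | nil => rfl
  | cons s _ ih => exact ih _

theorem subset_wordImage_and_exists_mem {P : Set Q} (hmaps : ∀ s, Set.MapsTo (act s) P P)
    (hcover : ∀ s, Pᶜ ⊆ Set.range (act s)) (w : List A) (R : Finset Q)
    (hR : Pᶜ ⊆ R) (hRP : ∃ x ∈ R, x ∈ P) :
    Pᶜ ⊆ wordImage act R w ∧ ∃ x ∈ wordImage act R w, x ∈ P := by
  induction w generalizing R with
  | nil => exact ⟨hR, hRP⟩
  | cons s _ ih =>
    refine ih _ (fun y hy => ?_) ?_
    · obtain ⟨x, rfl⟩ := hcover s hy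
      exact Finset.mem_image_of_mem _ (hR fun hx => hy (hmaps s hx))
    · obtain ⟨x, hx, hxP⟩ := hRP
      exact ⟨act s x, Finset.mem_image_of_mem _ hx, hmaps s hxP⟩

theorem card_compl_lt_card_wordImage [Fintype Q] {P : Finset Q} (hP : P.Nonempty)
    (hmaps : ∀ s, Set.MapsTo (act s) P P) (hcover : ∀ s, (P : Set Q)ᶜ ⊆ Set.range (act s))
    (w : List A) : Pᶜ.card < (wordImage act Finset.univ w).card := by
  obtain ⟨p, hp⟩ := hP
  obtain ⟨hsub, x, hx, hxP⟩ := subset_wordImage_and_exists_mem hmaps hcover w Finset.univ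
    (by simp) ⟨p, Finset.mem_univ p, hp⟩
  rw [← Finset.coe_compl, Finset.coe_subset] at hsub
  exact Finset.card_lt_card ((Finset.ssubset_iff_of_subset hsub).2 ⟨x, hx, by simpa using hxP⟩)

end WordImage

section HasDefectOne

variable {Q : Type*} [Fintype Q] [DecidableEq Q] {f : Q → Q} {e x y : Q}

/-- The map `f` has defect one: `e` is the only state it misses, and it merges the distinct states
`x` and `y`. On a finite type these are then the only two states merged (see
`HasDefectOne.eq_or_eq_of_map_eq`). -/
structure HasDefectOne (f : Q → Q) (e x y : Q) : Prop where
  image_univ : Finset.univ.image f = {e}ᶜ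
  ne : x ≠ y
  map_eq : f x = f y

theorem exists_hasDefectOne (hcard : Fintype.card Q ≤ (Finset.univ.image f).card + 1)
    (hf : ¬ Function.Injective f) : ∃ e x y, HasDefectOne f e x y := by
  have hlt : (Finset.univ.image f).card < Fintype.card Q :=
    lt_of_le_of_ne (Finset.card_le_univ _) fun h =>
      hf (Set.injOn_univ.1 (by simpa using Finset.card_image_iff.1 (h.trans Finset.card_univ.symm)))
  obtain ⟨e, he⟩ : ∃ e, (Finset.univ.image f)ᶜ = {e} := by
    rw [← Finset.card_eq_one, Finset.card_compl]
    omega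
  obtain ⟨x, y, hxy, hne⟩ := Function.not_injective_iff.1 hf
  exact ⟨e, x, y, by rw [← he, compl_compl], hne, hxy⟩

namespace HasDefectOne

theorem symm (h : HasDefectOne f e x y) : HasDefectOne f e y x :=
  ⟨h.image_univ, h.ne.symm, h.map_eq.symm⟩

theorem map_ne (h : HasDefectOne f e x y) (u : Q) : f u ≠ e := by
  simpa [h.image_univ] using Finset.mem_image_of_mem f (Finset.mem_univ u)

theorem compl_subset_range (h : HasDefectOne f e x y) : {e}ᶜ ⊆ Set.range f := by
  simpa using (congrArg ((↑) : Finset Q → Set Q) h.image_univ).ge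

theorem injOn_compl_right (h : HasDefectOne f e x y) : Set.InjOn f {y}ᶜ := by
  have himage : Finset.univ.image f ⊆ ({y}ᶜ : Finset Q).image f := by
    intro z hz
    obtain ⟨u, -, rfl⟩ := Finset.mem_image.1 hz
    obtain rfl | hu := eq_or_ne u y
    · exact Finset.mem_image.2 ⟨x, by simpa using h.ne, h.map_eq⟩
    · exact Finset.mem_image_of_mem f (by simpa using hu)
  have hcard : (({y}ᶜ : Finset Q).image f).card = ({y}ᶜ : Finset Q).card := by
    refine le_antisymm Finset.card_image_le ?_
    simpa [h.image_univ, Finset.card_compl] using Finset.card_le_card himage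
  simpa using Finset.card_image_iff.1 hcard

theorem eq_or_eq_of_map_eq (h : HasDefectOne f e x y) {u v : Q} (huv : f u = f v) (hne : u ≠ v) :
    u = x ∨ u = y := by
  by_contra! hu
  have hvx : v = x := by
    by_contra hv
    exact hne (h.symm.injOn_compl_right hu.1 hv huv)
  have hvy : v = y := by
    by_contra hv
    exact hne (h.injOn_compl_right hu.2 hv huv)
  exact h.ne (hvx.symm.trans hvy)

end HasDefectOne

end HasDefectOne

section Avoidable

variable {Q A : Type*} [Fintype Q] [DecidableEq Q] {act : A → Q → Q}
  {k l m : ℕ} {T T' : Finset Q} {s : A} {e x y z : Q}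

/-- Some word of length at most `k` maps the set of all states into the complement of `T`. -/
def Avoidable (act : A → Q → Q) (k : ℕ) (T : Finset Q) : Prop :=
  ∃ w : List A, w.length ≤ k ∧ Disjoint (wordImage act Finset.univ w) T

/-- Words of length at most `k` have defect at most `m`, the defect of `w` being `|Q| - |Qw|`;
stated additively to avoid truncated subtraction. -/
def DefectLE (act : A → Q → Q) (k m : ℕ) : Prop :=
  ∀ w : List A, w.length ≤ k → Fintype.card Q ≤ (wordImage act Finset.univ w).card + m

theorem DefectLE.card_le (hD : DefectLE act k m) (hT : Avoidable act k T) : T.card ≤ m := by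
  obtain ⟨w, hw, hdisj⟩ := hT
  have hunion := Finset.card_le_univ (wordImage act Finset.univ w ∪ T)
  rw [Finset.card_union_of_disjoint hdisj] at hunion
  have := hD w hw
  omega

namespace Avoidable

theorem empty : Avoidable act 0 ∅ :=
  ⟨[], le_rfl, Finset.disjoint_empty_right _⟩

theorem mono (hT : Avoidable act k T) (hkl : k ≤ l) : Avoidable act l T := by
  obtain ⟨w, hw, hdisj⟩ := hT
  exact ⟨w, hw.trans hkl, hdisj⟩

theorem of_preimage_subset (hT : Avoidable act k T) (hs : ∀ u, act s u ∈ T' → u ∈ T) :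
    Avoidable act (k + 1) T' := by
  obtain ⟨w, hw, hdisj⟩ := hT
  refine ⟨w ++ [s], by simpa using hw, Finset.disjoint_left.2 fun z hz hzT => ?_⟩
  rw [wordImage_append] at hz
  obtain ⟨u, hu, rfl⟩ := Finset.mem_image.1 hz
  exact Finset.disjoint_left.1 hdisj hu (hs u hzT)

theorem image (hT : Avoidable act k T) (hs : Function.Injective (act s)) :
    Avoidable act (k + 1) (T.image (act s)) :=
  hT.of_preimage_subset fun _ hu => (hs.mem_finset_image).1 hu

theorem insert_image (hT : Avoidable act k T) (he : ∀ u, act s u ≠ e)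
    (hsat : ∀ u, ∀ v ∈ T, act s u = act s v → u ∈ T) :
    Avoidable act (k + 1) (insert e (T.image (act s))) := by
  refine hT.of_preimage_subset (s := s) fun u hu => ?_
  obtain ⟨v, hv, hvu⟩ := Finset.mem_image.1 (Finset.mem_of_mem_insert_of_ne hu (he u))
  exact hsat u v hv hvu.symm

end Avoidable

namespace HasDefectOne

theorem avoidable_singleton (h : HasDefectOne (act s) e x y) : Avoidable act 1 {e} := by
  simpa using Avoidable.empty.insert_image h.map_ne (by simp)

theorem avoidable_insert_image (h : HasDefectOne (act s) e x y) (hT : Avoidable act k T)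
    (hx : x ∉ T) (hy : y ∉ T) : Avoidable act (k + 1) (insert e (T.image (act s))) := by
  refine hT.insert_image h.map_ne fun u v hv huv => ?_
  by_contra hu
  obtain rfl | rfl := h.eq_or_eq_of_map_eq huv.symm fun hvu => hu (hvu ▸ hv)
  exacts [hx hv, hy hv]

theorem avoidable_pair (h : HasDefectOne (act s) e x y) (hT : Avoidable act k {x, y}) :
    Avoidable act (k + 1) {e, act s x} := by
  have hsat : ∀ u, ∀ v ∈ ({x, y} : Finset Q), act s u = act s v → u ∈ ({x, y} : Finset Q) := by
    intro u v hv huv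
    by_cases hne : u = v
    · exact hne ▸ hv
    · simpa using h.eq_or_eq_of_map_eq huv hne
  simpa [h.map_eq] using hT.insert_image h.map_ne hsat

theorem mem_or_mem_of_avoidable (h : HasDefectOne (act s) e x y) (hD : DefectLE act (k + 1) m)
    (hT : Avoidable act k T) (hm : m ≤ T.card) : x ∈ T ∨ y ∈ T := by
  by_contra! hxy
  have hinj : Set.InjOn (act s) T := 
    h.injOn_compl_right.mono (Set.subset_compl_singleton_iff.2 hxy.2)
  have hcard := hD.card_le (h.avoidable_insert_image hT hxy.1 hxy.2)
  rw [Finset.card_insert_of_notMem (by simp [h.map_ne]), Finset.card_image_of_injOn hinj] at hcard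
  omega

theorem eq_or_eq_of_avoidable_singleton (h : HasDefectOne (act s) e x y)
    (hD : DefectLE act (k + 1) 1) (hz : Avoidable act k {z}) : z = x ∨ z = y := by
  simpa [eq_comm] using h.mem_or_mem_of_avoidable hD hz (Finset.card_singleton z).ge

end HasDefectOne

end Avoidable

/-- The configuration of states and letters in the theorem. The letters `a` and `d` are permutations
which preserve `{p₁, p₂, p₃}`, move `p₁` to `p₂` and `p₂` to `p₃` respectively, and are each allowed
two actions on the remaining two states of this set. -/
structure TriangleConfig {Q A : Type*} [Fintype Q] [DecidableEq Q] (act : A → Q → Q)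
    (p₁ p₂ p₃ : Q) (b a d : A) : Prop where
  ne₁₃ : p₁ ≠ p₃
  ne₂₃ : p₂ ≠ p₃
  defect_b : HasDefectOne (act b) p₁ p₁ p₂
  injective_a : Function.Injective (act a)
  injective_d : Function.Injective (act d)
  map_a : act a p₁ = p₂
  image_a : ({p₂, p₃} : Finset Q).image (act a) = {p₁, p₃}
  map_d : act d p₂ = p₃
  image_d : ({p₁, p₃} : Finset Q).image (act d) = {p₁, p₂}

namespace TriangleConfig

variable {Q A : Type*} [Fintype Q] [DecidableEq Q] {act : A → Q → Q} {p₁ p₂ p₃ y : Q}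
  {a b c d s : A}

theorem map_a_mem_iff (h : TriangleConfig act p₁ p₂ p₃ b a d) :
    act a y ∈ ({p₁, p₂, p₃} : Finset Q) ↔ y ∈ ({p₁, p₂, p₃} : Finset Q) := by
  have himage : ({p₁, p₂, p₃} : Finset Q).image (act a) = {p₁, p₂, p₃} := by
    rw [Finset.image_insert, h.image_a, h.map_a, Finset.insert_comm]
  simpa only [himage] using h.injective_a.mem_finset_image (s := {p₁, p₂, p₃}) (a := y)

theorem map_d_mem_iff (h : TriangleConfig act p₁ p₂ p₃ b a d) :
    act d y ∈ ({p₁, p₂, p₃} : Finset Q) ↔ y ∈ ({p₁, p₂, p₃} : Finset Q) := by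
  have himage : ({p₁, p₂, p₃} : Finset Q).image (act d) = {p₁, p₂, p₃} := by
    rw [Finset.insert_comm, Finset.image_insert, h.image_d, h.map_d, Finset.insert_comm,
      Finset.pair_comm p₃, Finset.insert_comm]
  simpa only [himage] using h.injective_d.mem_finset_image (s := {p₁, p₂, p₃}) (a := y)

theorem map_p₁_eq_or_eq_of_injective (h : TriangleConfig act p₁ p₂ p₃ b a d)
    (hD : DefectLE act 3 1) (hs : Function.Injective (act s)) : act s p₁ = p₁ ∨ act s p₁ = p₂ :=
  h.defect_b.eq_or_eq_of_avoidable_singleton hD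
    (by simpa using h.defect_b.avoidable_singleton.image hs)

theorem hasDefectOne_of_not_injective (h : TriangleConfig act p₁ p₂ p₃ b a d)
    (hD : DefectLE act 3 1) (hc : ¬ Function.Injective (act c)) :
    HasDefectOne (act c) p₁ p₁ p₂ := by
  obtain ⟨e, x, y, hexy⟩ := exists_hasDefectOne (hD [c] (by simp)) hc
  have hD2 : DefectLE act 2 1 := fun w hw => hD w (by omega)
  have hp₁ : p₁ = x ∨ p₁ = y :=
    hexy.eq_or_eq_of_avoidable_singleton hD2 h.defect_b.avoidable_singleton
  have hp₂ : p₂ = x ∨ p₂ = y :=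
    hexy.eq_or_eq_of_avoidable_singleton hD
      (by simpa [h.map_a] using h.defect_b.avoidable_singleton.image h.injective_a)
  have he : e = p₁ ∨ e = p₂ :=
    h.defect_b.eq_or_eq_of_avoidable_singleton hD2 hexy.avoidable_singleton
  have hde : act d e = p₁ ∨ act d e = p₂ :=
    h.defect_b.eq_or_eq_of_avoidable_singleton hD
      (by simpa using hexy.avoidable_singleton.image h.injective_d)
  have he₁ : e = p₁ := he.resolve_right fun he₂ => by
    rw [he₂, h.map_d] at hde
    exact hde.elim h.ne₁₃.symm h.ne₂₃.symm
  obtain ⟨rfl, rfl⟩ | ⟨rfl, rfl⟩ : p₁ = x ∧ p₂ = y ∨ p₂ = x ∧ p₁ = y := by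
    have := h.defect_b.ne
    grind
  exacts [he₁ ▸ hexy, he₁ ▸ hexy.symm]

theorem mem_of_avoidable_pair₂ (h : TriangleConfig act p₁ p₂ p₃ b a d) (hD : DefectLE act 9 2)
    (hy : Avoidable act 7 {p₂, y}) : y ∈ ({p₁, p₂, p₃} : Finset Q) := by
  by_contra hyP
  have hdy : act d y ∉ ({p₁, p₂, p₃} : Finset Q) := mt h.map_d_mem_iff.1 hyP
  simp only [Finset.mem_insert, Finset.mem_singleton, not_or] at hdy
  have hav : Avoidable act 8 {p₃, act d y} := by
    simpa [Finset.image_insert, h.map_d] using hy.image h.injective_d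
  have hmeet := h.defect_b.mem_or_mem_of_avoidable hD hav (Finset.card_pair (Ne.symm hdy.2.2)).ge
  simp [h.ne₁₃, h.ne₂₃, Ne.symm hdy.1, Ne.symm hdy.2.1] at hmeet

theorem mem_of_avoidable_pair₁ (h : TriangleConfig act p₁ p₂ p₃ b a d) (hD : DefectLE act 9 2)
    (hy : Avoidable act 6 {p₁, y}) : y ∈ ({p₁, p₂, p₃} : Finset Q) := by
  refine h.map_a_mem_iff.1 (h.mem_of_avoidable_pair₂ hD ?_)
  simpa [Finset.image_insert, h.map_a] using hy.image h.injective_a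

theorem avoidable_pair_map_p₃ (h : TriangleConfig act p₁ p₂ p₃ b a d)
    (hc : HasDefectOne (act c) p₁ p₁ p₂) : Avoidable act 4 {p₁, act c p₃} := by
  have hav₂ : Avoidable act 2 {p₂} := by
    simpa [h.map_a] using h.defect_b.avoidable_singleton.image h.injective_a
  have hav₃ : Avoidable act 3 {p₃} := by
    simpa [h.map_d] using hav₂.image h.injective_d
  simpa using hc.avoidable_insert_image hav₃ (by simpa using h.ne₁₃) (by simpa using h.ne₂₃)

theorem map_p₃_mem (h : TriangleConfig act p₁ p₂ p₃ b a d) (hD : DefectLE act 9 2)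
    (hc : HasDefectOne (act c) p₁ p₁ p₂) : act c p₃ ∈ ({p₁, p₂, p₃} : Finset Q) :=
  h.mem_of_avoidable_pair₁ hD ((h.avoidable_pair_map_p₃ hc).mono (by norm_num))

theorem map_p₁_mem_of_avoidable (h : TriangleConfig act p₁ p₂ p₃ b a d) (hD : DefectLE act 9 2)
    (h₁₂ : Avoidable act 5 {p₁, p₂}) (hc : HasDefectOne (act c) p₁ p₁ p₂) :
    act c p₁ ∈ ({p₁, p₂, p₃} : Finset Q) :=
  h.mem_of_avoidable_pair₁ hD (hc.avoidable_pair h₁₂)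

theorem avoidable_pairs (h : TriangleConfig act p₁ p₂ p₃ b a d) (hD : DefectLE act 9 2) :
    Avoidable act 5 {p₁, p₂} ∧ Avoidable act 5 {p₁, p₃} := by
  have hav := h.avoidable_pair_map_p₃ h.defect_b
  obtain hb₃ | hb₃ : act b p₃ = p₂ ∨ act b p₃ = p₃ := by
    simpa [h.defect_b.map_ne] using h.map_p₃_mem hD h.defect_b
  · rw [hb₃] at hav
    have h₁₂ : Avoidable act 5 {p₁, p₂} := hav.mono (by norm_num)
    have hb₁_ne : act b p₁ ≠ p₂ := fun hb₁ =>
      (h.defect_b.eq_or_eq_of_map_eq (hb₃.trans hb₁.symm) h.ne₁₃.symm).elim h.ne₁₃.symm h.ne₂₃.symm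
    have hb₁ : act b p₁ = p₃ := by
      simpa [h.defect_b.map_ne, hb₁_ne] using h.map_p₁_mem_of_avoidable hD h₁₂ h.defect_b
    exact ⟨h₁₂, hb₁ ▸ h.defect_b.avoidable_pair hav⟩
  · rw [hb₃] at hav
    exact ⟨h.image_d ▸ hav.image h.injective_d, hav.mono (by norm_num)⟩

theorem map_mem_of_avoidable_pair (h : TriangleConfig act p₁ p₂ p₃ b a d)
    (hD₁ : DefectLE act 3 1) (hD₂ : DefectLE act 9 2) (hs : Function.Injective (act s))
    (hy : Avoidable act 5 {p₁, y}) : act s y ∈ ({p₁, p₂, p₃} : Finset Q) := by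
  have hav : Avoidable act 6 {act s p₁, act s y} := by
    simpa [Finset.image_insert] using hy.image hs
  obtain hs₁ | hs₁ := h.map_p₁_eq_or_eq_of_injective hD₁ hs <;> rw [hs₁] at hav
  exacts [h.mem_of_avoidable_pair₁ hD₂ hav, h.mem_of_avoidable_pair₂ hD₂ (hav.mono (by norm_num))]

theorem mapsTo (h : TriangleConfig act p₁ p₂ p₃ b a d) (hD₁ : DefectLE act 3 1)
    (hD₂ : DefectLE act 9 2) (s : A) :
    Set.MapsTo (act s) ({p₁, p₂, p₃} : Finset Q) ({p₁, p₂, p₃} : Finset Q) := by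
  obtain ⟨h₁₂, h₁₃⟩ := h.avoidable_pairs hD₂
  suffices hmem : act s p₁ ∈ ({p₁, p₂, p₃} : Finset Q) ∧ act s p₂ ∈ ({p₁, p₂, p₃} : Finset Q) ∧
      act s p₃ ∈ ({p₁, p₂, p₃} : Finset Q) by
    intro y hy
    obtain rfl | rfl | rfl : y = p₁ ∨ y = p₂ ∨ y = p₃ := by simpa using hy
    exacts [hmem.1, hmem.2.1, hmem.2.2]
  by_cases hs : Function.Injective (act s)
  · refine ⟨?_, h.map_mem_of_avoidable_pair hD₁ hD₂ hs h₁₂,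
      h.map_mem_of_avoidable_pair hD₁ hD₂ hs h₁₃⟩
    obtain hs₁ | hs₁ := h.map_p₁_eq_or_eq_of_injective hD₁ hs <;> simp [hs₁]
  · have hdef := h.hasDefectOne_of_not_injective hD₁ hs
    have hs₁ := h.map_p₁_mem_of_avoidable hD₂ h₁₂ hdef
    exact ⟨hs₁, hdef.map_eq ▸ hs₁, h.map_p₃_mem hD₂ hdef⟩

theorem compl_subset_range (h : TriangleConfig act p₁ p₂ p₃ b a d) (hD : DefectLE act 3 1)
    (s : A) : (({p₁, p₂, p₃} : Finset Q) : Set Q)ᶜ ⊆ Set.range (act s) := by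
  by_cases hs : Function.Injective (act s)
  · simp [(Finite.surjective_of_injective hs).range_eq]
  · exact (Set.compl_subset_compl.2 (by simp)).trans
      (h.hasDefectOne_of_not_injective hD hs).compl_subset_range

end TriangleConfig

theorem stmt_19 {Q A : Type*} [Fintype Q] [DecidableEq Q] (act : A → Q → Q)
    (hH1 : ∃ w : List A, (wordImage act Finset.univ w).card ≤ Fintype.card Q - 2)
    (hH2 : ∀ w : List A, w.length ≤ 3 →
      Fintype.card Q - 2 < (wordImage act Finset.univ w).card)
    (hu : ∃ u : List A, (wordImage act Finset.univ u).card ≤ Fintype.card Q - 3)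
    (p₁ p₂ p₃ : Q) (hp12 : p₁ ≠ p₂) (hp13 : p₁ ≠ p₃) (hp23 : p₂ ≠ p₃)
    (b a d : A) (q : Q) (hq₁ : q ≠ p₁) (hq₂ : q ≠ p₂)
    (hb : Finset.univ.image (act b) = Finset.univ \ {p₁})
    (hb12 : act b p₁ = act b p₂)
    (ha : Finset.univ.image (act a) = Finset.univ)
    (hd : Finset.univ.image (act d) = Finset.univ)
    (ha1 : act a p₁ = p₂)
    (ha23 : ({p₂, p₃} : Finset Q).image (act a) = {p₁, p₃})
    (hd2 : act d p₂ = p₃)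
    (hd13 : ({p₁, p₃} : Finset Q).image (act d) = {p₁, p₂})
    (hqb : act b q ≠ p₁)
    (hbadb : wordImage act Finset.univ [b, a, d, b] = Finset.univ \ {p₁, act b q}) :
    ∃ w : List A, w.length ≤ 9 ∧
      (wordImage act Finset.univ w).card ≤ Fintype.card Q - 3 := by
  by_contra! hlarge
  have injective_of_image {s : A} (hs : Finset.univ.image (act s) = Finset.univ) :
      Function.Injective (act s) :=
    Set.injOn_univ.1 (by simpa using Finset.card_image_iff.1 (congrArg Finset.card hs))
  have config : TriangleConfig act p₁ p₂ p₃ b a d :=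
    { ne₁₃ := hp13
      ne₂₃ := hp23
      defect_b := ⟨by rw [hb, Finset.compl_eq_univ_sdiff], hp12, hb12⟩
      injective_a := injective_of_image ha
      injective_d := injective_of_image hd
      map_a := ha1
      image_a := ha23
      map_d := hd2
      image_d := hd13 }
  have hD₁ : DefectLE act 3 1 := fun w hw => by have := hH2 w hw; omega
  have hD₂ : DefectLE act 9 2 := fun w hw => by have := hlarge w hw; omega
  obtain ⟨u, hu⟩ := hu
  have hcard := card_compl_lt_card_wordImage (Finset.insert_nonempty p₁ {p₂, p₃})
    (config.mapsTo hD₁ hD₂) (config.compl_subset_range hD₁) u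
  rw [Finset.card_compl, Finset.card_eq_three.2 ⟨p₁, p₂, p₃, hp12, hp13, hp23, rfl⟩] at hcard
  exact hcard.not_ge hu
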